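/- There is a constant K > 0 such that for all ρ with Im ρ ≥ 0 and |ρ| ≥ 1: |a(ρ²)| ≤ K·e^{τT} and |d(ρ²)| ≤ K·|ρ|^{−1}·e^{τT}, where τ = Im ρ, a(λ) = α·φ(T,λ) + β·S'(T,λ) − (1 + αβ), and d(λ) = S(T,λ). -/

import Mathlib

/-!
For a solution of `y'' = (q - ρ²) y`, measure the Cauchy data by the energy norm
`√(‖y'‖² + |ρ|² ‖y‖²)`. Adding and subtracting `|ρ|² y` leaves the potential `q + (|ρ|² - ρ²)` as
the only source of energy, and `||ρ|² - ρ²| = 2 |Im ρ| |ρ|`, so by Grönwall's inequality the energy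
norm grows on each piece at an exponential rate of at most `|q| / (2 |ρ|) + |Im ρ|`. For `|ρ| ≥ 1` a
jump multiplies it by at most a constant independent of `ρ`. As the energy norm is `1` at `0` for
`S` and `|ρ|` for `C`, its value at `T` bounds `|ρ| |S|`, `|S'|` for `S` and `|ρ| |C|` for `C`.

The integral equations do not presuppose that the derivative is integrable. This is recovered by
continuation: on a half-open interval the energy bound excludes blow-up at the right end, and if the
integral in the equation for the derivative had its junk value `0` at every later point, the
derivative would be constant, hence integrable, there.
-/

open MeasureTheory Set

/-- `PiecewiseSLSol q N b γ η lam y y'` : the family of pieces `y j` (with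
derivatives `y' j`), `j = 1,…,N`, solves `-y'' + q y = lam y` on each subinterval
`[b (j-1), b j]` with the discontinuity (jump) conditions at the interior points. -/
def PiecewiseSLSol (q : ℝ → ℝ) (N : ℕ) (b : ℕ → ℝ) (γ η : ℕ → ℝ) (lam : ℂ)
    (y y' : ℕ → ℝ → ℂ) : Prop :=
  (∀ j, 1 ≤ j → j ≤ N → ∀ x ∈ Icc (b (j - 1)) (b j),
      y j x = y j (b (j - 1)) + ∫ t in (b (j - 1))..x, y' j t) ∧
  (∀ j, 1 ≤ j → j ≤ N → ∀ x ∈ Icc (b (j - 1)) (b j),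
      y' j x = y' j (b (j - 1)) + ∫ t in (b (j - 1))..x, ((q t : ℂ) - lam) * y j t) ∧
  (∀ j, 1 ≤ j → j ≤ N - 1 →
      y (j + 1) (b j) = (γ j : ℂ) * y j (b j) ∧
      y' (j + 1) (b j) = ((γ j : ℂ))⁻¹ * y' j (b j) + (η j : ℂ) * y j (b j))

section AbsoluteContinuity

variable {X Y E : Type*} [PseudoMetricSpace X] [PseudoMetricSpace Y] {a b : ℝ}

theorem absolutelyContinuousOnInterval_of_dist_le_mul {f : ℝ → X} {g : ℝ → Y} {K : ℝ}
    (hf : AbsolutelyContinuousOnInterval f a b)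
    (hg : ∀ x ∈ uIcc a b, ∀ y ∈ uIcc a b, dist (g x) (g y) ≤ K * dist (f x) (f y)) :
    AbsolutelyContinuousOnInterval g a b := by
  unfold AbsolutelyContinuousOnInterval at hf ⊢
  refine squeeze_zero' (.of_forall fun _ => Finset.sum_nonneg fun _ _ => dist_nonneg) ?_
    (by simpa using Filter.Tendsto.const_mul K hf)
  filter_upwards [Filter.mem_inf_of_right (Filter.mem_principal_self _)] with I hI
  rw [Finset.mul_sum]
  exact Finset.sum_le_sum fun i hi => hg _ (hI.1 i hi).1 _ (hI.1 i hi).2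

theorem absolutelyContinuousOnInterval_locallyLipschitz_comp {F : Type*}
    [SeminormedAddCommGroup F] {f : ℝ → F} {φ : F → X}
    (hφ : LocallyLipschitz φ) (hf : AbsolutelyContinuousOnInterval f a b) :
    AbsolutelyContinuousOnInterval (fun x => φ (f x)) a b := by
  obtain ⟨K, hK⟩ := (hφ.locallyLipschitzOn (s := f '' uIcc a b)).exists_lipschitzOnWith_of_compact
    (isCompact_uIcc.image_of_continuousOn hf.continuousOn)
  exact absolutelyContinuousOnInterval_of_dist_le_mul hf fun x hx y hy =>
    hK.dist_le_mul _ (mem_image_of_mem f hx) _ (mem_image_of_mem f hy)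

theorem apply_right_le_apply_left_of_ae_deriv_nonpos {f : ℝ → ℝ} (hab : a ≤ b)
    (hf : AbsolutelyContinuousOnInterval f a b)
    (hf' : ∀ᵐ x, x ∈ Ioo a b → deriv f x ≤ 0) : f b ≤ f a := by
  rw [← sub_nonpos, ← hf.integral_deriv_eq_sub, intervalIntegral.integral_of_le hab,
    integral_Ioc_eq_integral_Ioo]
  exact setIntegral_nonpos_of_ae_restrict ((ae_restrict_iff' measurableSet_Ioo).2 hf')

theorem le_mul_exp_integral_of_ae_deriv_le {f k : ℝ → ℝ} (hab : a ≤ b)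
    (hf : AbsolutelyContinuousOnInterval f a b) (hk : IntervalIntegrable k volume a b)
    (hfk : ∀ᵐ x, x ∈ Ioo a b → deriv f x ≤ k x * f x) :
    f b ≤ f a * Real.exp (∫ t in a..b, k t) := by
  let g : ℝ → ℝ := fun x => Real.exp (-∫ t in a..x, k t)
  have hg : AbsolutelyContinuousOnInterval g a b :=
    absolutelyContinuousOnInterval_locallyLipschitz_comp
      (φ := fun u => Real.exp (-u)) (Real.contDiff_exp.comp contDiff_neg).locallyLipschitz
      (hk.absolutelyContinuousOnInterval_intervalIntegral left_mem_uIcc)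
  have hfg : f b * g b ≤ f a * g a := by
    refine apply_right_le_apply_left_of_ae_deriv_nonpos hab (hf.fun_mul hg) ?_
    filter_upwards [hfk, hf.ae_differentiableAt, hk.ae_hasDerivAt_integral] with x hfkx hfx hkx hx
    have hx' : x ∈ uIcc a b := Icc_subset_uIcc (Ioo_subset_Icc_self hx)
    have hgx : HasDerivAt g (g x * -k x) x := (hkx hx' a left_mem_uIcc).neg.exp
    rw [((hfx hx').hasDerivAt.fun_mul hgx).deriv]
    calc deriv f x * g x + f x * (g x * -k x) = (deriv f x - k x * f x) * g x := by ring
      _ ≤ 0 := mul_nonpos_of_nonpos_of_nonneg (sub_nonpos.2 (hfkx hx)) (Real.exp_pos _).le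
  calc f b = f b * g b * Real.exp (∫ t in a..b, k t) := by
        rw [mul_assoc, ← Real.exp_add, neg_add_cancel, Real.exp_zero, mul_one]
    _ ≤ f a * g a * Real.exp (∫ t in a..b, k t) := by gcongr
    _ = f a * Real.exp (∫ t in a..b, k t) := by simp [g]

variable [NormedAddCommGroup E] [NormedSpace ℝ E] {F f : ℝ → E}

theorem absolutelyContinuousOnInterval_of_eq_add_integral (hf : IntervalIntegrable f volume a b)
    (hF : ∀ x ∈ uIcc a b, F x = F a + ∫ t in a..x, f t) :
    AbsolutelyContinuousOnInterval F a b := by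
  refine absolutelyContinuousOnInterval_of_dist_le_mul (K := 1)
    (hf.norm.absolutelyContinuousOnInterval_intervalIntegral left_mem_uIcc) fun x hx y hy => ?_
  have hfx := hf.mono_set (uIcc_subset_uIcc_left hx)
  have hfy := hf.mono_set (uIcc_subset_uIcc_left hy)
  rw [hF x hx, hF y hy, dist_add_left, dist_eq_norm, Real.dist_eq, one_mul,
    intervalIntegral.integral_interval_sub_left hfx hfy,
    intervalIntegral.integral_interval_sub_left hfx.norm hfy.norm]
  exact intervalIntegral.norm_integral_le_abs_integral_norm

theorem ae_hasDerivAt_of_eq_add_integral [CompleteSpace E] (hf : IntervalIntegrable f volume a b)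
    (hF : ∀ x ∈ uIcc a b, F x = F a + ∫ t in a..x, f t) :
    ∀ᵐ x, x ∈ Ioo a b → HasDerivAt F (f x) x := by
  filter_upwards [hf.ae_hasDerivAt_integral] with x hfx hx
  have hsub : Ioo a b ⊆ uIcc a b := Ioo_subset_Icc_self.trans Icc_subset_uIcc
  exact ((hfx (hsub hx) a left_mem_uIcc).const_add (F a)).congr_of_eventuallyEq
    (Filter.eventuallyEq_of_mem (Ioo_mem_nhds hx.1 hx.2) fun t ht => hF t (hsub ht))

end AbsoluteContinuity

section Energy

variable {E : Type*} [NormedAddCommGroup E] {κ : ℝ}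

/-- The energy norm `√(‖w'‖² + κ² ‖w‖²)` of the Cauchy data `(w, w')` of a solution of a
second-order equation with frequency `κ`. -/
noncomputable def energyNorm (κ : ℝ) (w w' : E) : ℝ := √(‖w'‖ ^ 2 + κ ^ 2 * ‖w‖ ^ 2)

theorem sq_energyNorm (κ : ℝ) (w w' : E) :
    energyNorm κ w w' ^ 2 = ‖w'‖ ^ 2 + κ ^ 2 * ‖w‖ ^ 2 :=
  Real.sq_sqrt (by positivity)

theorem energyNorm_nonneg (κ : ℝ) (w w' : E) : 0 ≤ energyNorm κ w w' :=
  Real.sqrt_nonneg _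

theorem norm_le_energyNorm (κ : ℝ) (w w' : E) : ‖w'‖ ≤ energyNorm κ w w' :=
  Real.le_sqrt_of_sq_le (le_add_of_nonneg_right (by positivity))

theorem mul_norm_le_energyNorm (κ : ℝ) (w w' : E) : κ * ‖w‖ ≤ energyNorm κ w w' :=
  Real.le_sqrt_of_sq_le (by rw [mul_pow]; exact le_add_of_nonneg_left (by positivity))

theorem energyNorm_le_add (hκ : 0 ≤ κ) (w w' : E) : energyNorm κ w w' ≤ κ * ‖w‖ + ‖w'‖ :=
  Real.sqrt_le_iff.2 ⟨by positivity, by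
    nlinarith [mul_nonneg hκ (mul_nonneg (norm_nonneg w) (norm_nonneg w'))]⟩

theorem energyNorm_zero_left (κ : ℝ) (w' : E) : energyNorm κ 0 w' = ‖w'‖ := by
  simp [energyNorm]

theorem energyNorm_zero_right (hκ : 0 ≤ κ) (w : E) : energyNorm κ w 0 = κ * ‖w‖ := by
  simp [energyNorm, ← mul_pow, Real.sqrt_sq (mul_nonneg hκ (norm_nonneg w))]

theorem energyNorm_transfer_le {𝕜 : Type*} [NormedField 𝕜] [NormedSpace 𝕜 E] (hκ : 1 ≤ κ)
    (g d e : 𝕜) (w w' : E) :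
    energyNorm κ (g • w) (d • w' + e • w) ≤ (‖g‖ + ‖d‖ + ‖e‖) * energyNorm κ w w' := by
  have hw := mul_norm_le_energyNorm κ w w'
  have hw' := norm_le_energyNorm κ w w'
  calc energyNorm κ (g • w) (d • w' + e • w)
      ≤ κ * ‖g • w‖ + ‖d • w' + e • w‖ := energyNorm_le_add (by linarith) _ _
    _ ≤ κ * ‖g • w‖ + (‖d • w'‖ + ‖e • w‖) := by gcongr; exact norm_add_le _ _
    _ = ‖g‖ * (κ * ‖w‖) + ‖d‖ * ‖w'‖ + ‖e‖ * ‖w‖ := by simp only [norm_smul]; ring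
    _ ≤ ‖g‖ * energyNorm κ w w' + ‖d‖ * energyNorm κ w w' + ‖e‖ * energyNorm κ w w' := by
        gcongr
        exact (le_mul_of_one_le_left (norm_nonneg w) hκ).trans hw
    _ = (‖g‖ + ‖d‖ + ‖e‖) * energyNorm κ w w' := by ring

/-- The exponential rate `‖v + κ²‖ / (2κ)` at which a potential with value `v` can amplify the
energy norm of frequency `κ` of a solution of `y'' = v y`. -/
noncomputable def energyRate (κ : ℝ) (v : ℂ) : ℝ := ‖v + (κ : ℂ) ^ 2‖ / (2 * κ)

theorem energyRate_norm_le {ρ : ℂ} (hρ : ρ ≠ 0) (v : ℂ) :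
    energyRate ‖ρ‖ (v - ρ ^ 2) ≤ ‖v‖ / (2 * ‖ρ‖) + |ρ.im| := by
  have hfactor : (‖ρ‖ : ℂ) ^ 2 - ρ ^ 2 = -(2 * ρ.im * Complex.I) * ρ := by
    rw [← Complex.conj_mul', sq, ← sub_mul, ← neg_sub ρ, Complex.sub_conj]
    push_cast
    ring
  have hnorm : ‖v - ρ ^ 2 + (‖ρ‖ : ℂ) ^ 2‖ ≤ ‖v‖ + 2 * |ρ.im| * ‖ρ‖ := by
    calc ‖v - ρ ^ 2 + (‖ρ‖ : ℂ) ^ 2‖ = ‖v + ((‖ρ‖ : ℂ) ^ 2 - ρ ^ 2)‖ := by ring_nf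
      _ ≤ ‖v‖ + ‖(‖ρ‖ : ℂ) ^ 2 - ρ ^ 2‖ := norm_add_le _ _
      _ = ‖v‖ + 2 * |ρ.im| * ‖ρ‖ := by simp [hfactor]
  calc energyRate ‖ρ‖ (v - ρ ^ 2) ≤ (‖v‖ + 2 * |ρ.im| * ‖ρ‖) / (2 * ‖ρ‖) := by
        unfold energyRate; gcongr
    _ = ‖v‖ / (2 * ‖ρ‖) + |ρ.im| := by field_simp

theorem intervalIntegrable_energyRate {V : ℝ → ℂ} {a b : ℝ} (κ : ℝ)
    (hV : IntervalIntegrable V volume a b) :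
    IntervalIntegrable (fun t => energyRate κ (V t)) volume a b :=
  (hV.add intervalIntegrable_const).norm.div_const _

theorem energyRate_nonneg (hκ : 0 ≤ κ) (v : ℂ) : 0 ≤ energyRate κ v := by
  unfold energyRate; positivity

theorem integral_energyRate_norm_le {V : ℝ → ℂ} {a b : ℝ} (hab : a ≤ b)
    (hV : IntervalIntegrable V volume a b) {ρ : ℂ} (hρ : ρ ≠ 0) :
    ∫ t in a..b, energyRate ‖ρ‖ (V t - ρ ^ 2) ≤
      (∫ t in a..b, ‖V t‖) / (2 * ‖ρ‖) + |ρ.im| * (b - a) := by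
  have hVρ : IntervalIntegrable (fun t => ‖V t‖ / (2 * ‖ρ‖)) volume a b := hV.norm.div_const _
  calc ∫ t in a..b, energyRate ‖ρ‖ (V t - ρ ^ 2)
      ≤ ∫ t in a..b, (‖V t‖ / (2 * ‖ρ‖) + |ρ.im|) :=
        intervalIntegral.integral_mono_on hab
          (intervalIntegrable_energyRate _ (hV.sub intervalIntegrable_const))
          (hVρ.add intervalIntegrable_const) fun t _ => energyRate_norm_le hρ (V t)
    _ = (∫ t in a..b, ‖V t‖) / (2 * ‖ρ‖) + |ρ.im| * (b - a) := by
        rw [intervalIntegral.integral_add hVρ intervalIntegrable_const,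
          intervalIntegral.integral_div, intervalIntegral.integral_const, smul_eq_mul, mul_comm |_|]

theorem exp_integral_energyRate_norm_le {V : ℝ → ℂ} {a b : ℝ} (hab : a ≤ b)
    (hV : IntervalIntegrable V volume a b) {ρ : ℂ} (hρ : 1 ≤ ‖ρ‖) :
    Real.exp (∫ t in a..b, energyRate ‖ρ‖ (V t - ρ ^ 2)) ≤
      Real.exp (∫ t in a..b, ‖V t‖) * Real.exp (|ρ.im| * (b - a)) := by
  have hnonneg : 0 ≤ ∫ t in a..b, ‖V t‖ :=
    intervalIntegral.integral_nonneg hab fun t _ => norm_nonneg (V t)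
  rw [← Real.exp_add, Real.exp_le_exp]
  calc ∫ t in a..b, energyRate ‖ρ‖ (V t - ρ ^ 2)
      ≤ (∫ t in a..b, ‖V t‖) / (2 * ‖ρ‖) + |ρ.im| * (b - a) :=
        integral_energyRate_norm_le hab hV (norm_pos_iff.1 (one_pos.trans_le hρ))
    _ ≤ (∫ t in a..b, ‖V t‖) + |ρ.im| * (b - a) := by
        gcongr
        exact div_le_self hnonneg (by linarith)

end Energy

section IntegralSolution

attribute [local instance] InnerProductSpace.complexToReal

variable {E : Type*} [NormedAddCommGroup E] [InnerProductSpace ℂ E]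

theorem two_mul_inner_add_le_energyRate_mul {κ : ℝ} (hκ : 0 < κ) (v : ℂ) (w w' : E) :
    2 * inner ℝ w' (v • w) + κ ^ 2 * (2 * inner ℝ w w') ≤
      2 * energyRate κ v * energyNorm κ w w' ^ 2 := by
  have hcomplete : inner ℝ w' (v • w) + κ ^ 2 * inner ℝ w w' =
      inner ℝ w' ((v + (κ : ℂ) ^ 2) • w) := by
    rw [add_smul, inner_add_right, real_inner_comm w', ← Complex.ofReal_pow, Complex.coe_smul,
      real_inner_smul_right]
  calc 2 * inner ℝ w' (v • w) + κ ^ 2 * (2 * inner ℝ w w')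
      = 2 * inner ℝ w' ((v + (κ : ℂ) ^ 2) • w) := by rw [← hcomplete]; ring
    _ ≤ 2 * (‖w'‖ * ‖(v + (κ : ℂ) ^ 2) • w‖) := by gcongr; exact real_inner_le_norm _ _
    _ = energyRate κ v * (2 * ‖w'‖ * (κ * ‖w‖)) * 2 := by
        rw [norm_smul, energyRate]; field_simp
    _ ≤ energyRate κ v * (‖w'‖ ^ 2 + (κ * ‖w‖) ^ 2) * 2 := by
        gcongr
        · exact energyRate_nonneg hκ.le v
        · exact two_mul_le_add_sq _ _
    _ = 2 * energyRate κ v * energyNorm κ w w' ^ 2 := by rw [sq_energyNorm]; ring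

/-- `z`, with derivative `p`, solves `z'' = V z` on `[a, c]`, written as a pair of integral
equations. Integrability of the integrands is not part of the notion: the integrals may a priori
take the junk value `0`. -/
structure IsIntegralSolution (V : ℝ → ℂ) (a c : ℝ) (z p : ℝ → E) : Prop where
  eq_add_integral : ∀ x ∈ Icc a c, z x = z a + ∫ t in a..x, p t
  deriv_eq_add_integral : ∀ x ∈ Icc a c, p x = p a + ∫ t in a..x, V t • z t

namespace IsIntegralSolution

variable {V : ℝ → ℂ} {a c d κ : ℝ} {z p : ℝ → E}

theorem mono_right (h : IsIntegralSolution V a c z p) (hdc : d ≤ c) :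
    IsIntegralSolution V a d z p where
  eq_add_integral x hx := h.eq_add_integral x ⟨hx.1, hx.2.trans hdc⟩
  deriv_eq_add_integral x hx := h.deriv_eq_add_integral x ⟨hx.1, hx.2.trans hdc⟩

theorem absolutelyContinuousOnInterval (h : IsIntegralSolution V a c z p) (hac : a ≤ c)
    (hp : IntervalIntegrable p volume a c) : AbsolutelyContinuousOnInterval z a c :=
  absolutelyContinuousOnInterval_of_eq_add_integral hp
    (by rw [uIcc_of_le hac]; exact h.eq_add_integral)

theorem absolutelyContinuousOnInterval_deriv (h : IsIntegralSolution V a c z p) (hac : a ≤ c)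
    (hVz : IntervalIntegrable (fun t => V t • z t) volume a c) :
    AbsolutelyContinuousOnInterval p a c :=
  absolutelyContinuousOnInterval_of_eq_add_integral hVz
    (by rw [uIcc_of_le hac]; exact h.deriv_eq_add_integral)

theorem intervalIntegrable_smul (h : IsIntegralSolution V a c z p) (hac : a ≤ c)
    (hV : IntervalIntegrable V volume a c) (hp : IntervalIntegrable p volume a c) :
    IntervalIntegrable (fun t => V t • z t) volume a c :=
  hV.smul_continuousOn (h.absolutelyContinuousOnInterval hac hp).continuousOn

theorem ae_hasDerivAt_sq_energyNorm [CompleteSpace E] (h : IsIntegralSolution V a c z p)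
    (hac : a ≤ c) (κ : ℝ) (hV : IntervalIntegrable V volume a c)
    (hp : IntervalIntegrable p volume a c) :
    ∀ᵐ x, x ∈ Ioo a c → HasDerivAt (fun x => energyNorm κ (z x) (p x) ^ 2)
      (2 * inner ℝ (p x) (V x • z x) + κ ^ 2 * (2 * inner ℝ (z x) (p x))) x := by
  have hz' := ae_hasDerivAt_of_eq_add_integral hp
    (by rw [uIcc_of_le hac]; exact h.eq_add_integral)
  have hp' := ae_hasDerivAt_of_eq_add_integral (h.intervalIntegrable_smul hac hV hp)
    (by rw [uIcc_of_le hac]; exact h.deriv_eq_add_integral)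
  filter_upwards [hz', hp'] with x hzx hpx hx
  simp only [sq_energyNorm]
  exact (hpx hx).norm_sq.add ((hzx hx).norm_sq.const_mul (κ ^ 2))

theorem absolutelyContinuousOnInterval_sq_energyNorm (h : IsIntegralSolution V a c z p)
    (hac : a ≤ c) (κ : ℝ) (hV : IntervalIntegrable V volume a c)
    (hp : IntervalIntegrable p volume a c) :
    AbsolutelyContinuousOnInterval (fun x => energyNorm κ (z x) (p x) ^ 2) a c := by
  have hsq : LocallyLipschitz fun w : E => ‖w‖ ^ 2 := (contDiff_norm_sq ℝ).locallyLipschitz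
  simp only [sq_energyNorm]
  exact (absolutelyContinuousOnInterval_locallyLipschitz_comp hsq
    (h.absolutelyContinuousOnInterval_deriv hac (h.intervalIntegrable_smul hac hV hp))).fun_add
    ((absolutelyContinuousOnInterval_locallyLipschitz_comp hsq
      (h.absolutelyContinuousOnInterval hac hp)).const_mul (κ ^ 2))

theorem energyNorm_le_of_intervalIntegrable [CompleteSpace E] (h : IsIntegralSolution V a c z p)
    (hac : a ≤ c) (hκ : 0 < κ) (hV : IntervalIntegrable V volume a c)
    (hp : IntervalIntegrable p volume a c) :
    energyNorm κ (z c) (p c) ≤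
      energyNorm κ (z a) (p a) * Real.exp (∫ t in a..c, energyRate κ (V t)) := by
  have hgronwall := le_mul_exp_integral_of_ae_deriv_le hac
    (h.absolutelyContinuousOnInterval_sq_energyNorm hac κ hV hp)
    ((intervalIntegrable_energyRate κ hV).const_mul 2) ?_
  · rw [intervalIntegral.integral_const_mul] at hgronwall
    refine le_of_sq_le_sq ?_ (mul_nonneg (energyNorm_nonneg _ _ _) (Real.exp_nonneg _))
    rwa [mul_pow, ← Real.exp_nat_mul]
  · filter_upwards [h.ae_hasDerivAt_sq_energyNorm hac κ hV hp] with x hx hxm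
    rw [(hx hxm).deriv]
    exact two_mul_inner_add_le_energyRate_mul hκ _ _ _

theorem norm_deriv_le_of_intervalIntegrable [CompleteSpace E] (h : IsIntegralSolution V a c z p)
    (hV : IntervalIntegrable V volume a c)
    (hp : ∀ x ∈ Ico a c, IntervalIntegrable p volume a x) :
    ∀ x ∈ Ico a c,
      ‖p x‖ ≤ energyNorm 1 (z a) (p a) * Real.exp (∫ t in a..c, energyRate 1 (V t)) := by
  intro x hx
  have hVx := hV.mono_set (uIcc_subset_uIcc_left (Icc_subset_uIcc (Ico_subset_Icc_self hx)))
  calc ‖p x‖ ≤ energyNorm 1 (z x) (p x) := norm_le_energyNorm _ _ _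
    _ ≤ energyNorm 1 (z a) (p a) * Real.exp (∫ t in a..x, energyRate 1 (V t)) :=
        (h.mono_right hx.2.le).energyNorm_le_of_intervalIntegrable hx.1 one_pos hVx (hp x hx)
    _ ≤ energyNorm 1 (z a) (p a) * Real.exp (∫ t in a..c, energyRate 1 (V t)) := by
        gcongr
        · exact energyNorm_nonneg _ _ _
        · exact intervalIntegral.integral_mono_interval le_rfl hx.1 hx.2.le
            (.of_forall fun t => energyRate_nonneg zero_le_one _)
            (intervalIntegrable_energyRate 1 hV)

theorem intervalIntegrable_deriv_of_forall_lt [CompleteSpace E] (h : IsIntegralSolution V a c z p)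
    (hac : a ≤ c) (hV : IntervalIntegrable V volume a c)
    (hp : ∀ x ∈ Ico a c, IntervalIntegrable p volume a x) :
    IntervalIntegrable p volume a c := by
  have hcont : ContinuousOn p (Ico a c) := by
    intro x hx
    obtain ⟨d, hxd, hdc⟩ := exists_between hx.2
    have had : a ≤ d := hx.1.trans hxd.le
    have hVd := hV.mono_set (uIcc_subset_uIcc_left (Icc_subset_uIcc ⟨had, hdc.le⟩))
    have hd := h.mono_right hdc.le
    have hpd := (hd.absolutelyContinuousOnInterval_deriv had
      (hd.intervalIntegrable_smul had hVd (hp d ⟨had, hdc⟩))).continuousOn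
    rw [uIcc_of_le had] at hpd
    refine (hpd x ⟨hx.1, hxd.le⟩).mono_of_mem_nhdsWithin ?_
    filter_upwards [self_mem_nhdsWithin, mem_nhdsWithin_of_mem_nhds (Iio_mem_nhds hxd)]
      with t ht htd
    exact ⟨ht.1, htd.le⟩
  rw [intervalIntegrable_iff_integrableOn_Ico_of_le hac]
  exact Integrable.of_bound (hcont.aestronglyMeasurable measurableSet_Ico) _
    ((ae_restrict_iff' measurableSet_Ico).2 (.of_forall
      (h.norm_deriv_le_of_intervalIntegrable hV hp)))

theorem exists_gt_intervalIntegrable_deriv (h : IsIntegralSolution V a c z p) (had : a ≤ d)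
    (hdc : d < c) (hp : IntervalIntegrable p volume a d) :
    ∃ x ∈ Ioc d c, IntervalIntegrable p volume a x := by
  by_cases hVz : ∃ x ∈ Ioc d c, IntervalIntegrable (fun t => V t • z t) volume a x
  · obtain ⟨x, hx, hVzx⟩ := hVz
    exact ⟨x, hx, ((h.mono_right hx.2).absolutelyContinuousOnInterval_deriv
      (had.trans hx.1.le) hVzx).continuousOn.intervalIntegrable⟩
  · -- Beyond `d` the integral in the equation for `p` takes its junk value `0`.
    have hconst : ∀ x ∈ Ioc d c, p x = p a := fun x hx => by
      rw [h.deriv_eq_add_integral x ⟨had.trans hx.1.le, hx.2⟩,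
        intervalIntegral.integral_undef fun hVzx => hVz ⟨x, hx, hVzx⟩, add_zero]
    refine ⟨c, right_mem_Ioc.2 hdc, hp.trans
      (IntervalIntegrable.congr (f := fun _ => p a) ?_ intervalIntegrable_const)⟩
    rw [uIoc_of_le hdc.le]
    exact fun x hx => (hconst x hx).symm

theorem intervalIntegrable_deriv [CompleteSpace E] (h : IsIntegralSolution V a c z p)
    (hac : a ≤ c) (hV : IntervalIntegrable V volume a c) : IntervalIntegrable p volume a c := by
  let G : Set ℝ := {x ∈ Icc a c | IntervalIntegrable p volume a x}
  have haG : a ∈ G := ⟨left_mem_Icc.2 hac, .refl⟩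
  have hG : IsLUB G (sSup G) := isLUB_csSup ⟨a, haG⟩ ⟨c, fun x hx => hx.1.2⟩
  have had : a ≤ sSup G := hG.1 haG
  have hdc : sSup G ≤ c := hG.2 fun x hx => hx.1.2
  have hVd := hV.mono_set (uIcc_subset_uIcc_left (Icc_subset_uIcc ⟨had, hdc⟩))
  have hpd : IntervalIntegrable p volume a (sSup G) := by
    refine (h.mono_right hdc).intervalIntegrable_deriv_of_forall_lt had hVd fun x hx => ?_
    obtain ⟨y, hy, hxy, -⟩ := hG.exists_between hx.2
    exact hy.2.mono_set (uIcc_subset_uIcc_left (Icc_subset_uIcc ⟨hx.1, hxy.le⟩))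
  rcases hdc.eq_or_lt with heq | hlt
  · rwa [heq] at hpd
  · obtain ⟨x, hx, hpx⟩ := h.exists_gt_intervalIntegrable_deriv had hlt hpd
    exact absurd (hG.1 ⟨⟨had.trans hx.1.le, hx.2⟩, hpx⟩) hx.1.not_ge

theorem energyNorm_le [CompleteSpace E] (h : IsIntegralSolution V a c z p) (hac : a ≤ c)
    (hκ : 0 < κ) (hV : IntervalIntegrable V volume a c) :
    energyNorm κ (z c) (p c) ≤
      energyNorm κ (z a) (p a) * Real.exp (∫ t in a..c, energyRate κ (V t)) :=
  h.energyNorm_le_of_intervalIntegrable hac hκ hV (h.intervalIntegrable_deriv hac hV)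

end IsIntegralSolution

end IntegralSolution

section JumpConditions

/-- The factor by which the jump condition at `b j` can at most increase an energy norm of frequency
at least `1`. -/
noncomputable def jumpConstant (γ η : ℕ → ℝ) (j : ℕ) : ℝ := |γ j| + |γ j|⁻¹ + |η j|

theorem jumpConstant_nonneg (γ η : ℕ → ℝ) (j : ℕ) : 0 ≤ jumpConstant γ η j := by
  unfold jumpConstant; positivity

theorem jumpConstant_pos {γ : ℕ → ℝ} {j : ℕ} (hγ : γ j ≠ 0) (η : ℕ → ℝ) :
    0 < jumpConstant γ η j := by
  unfold jumpConstant; positivity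

namespace PiecewiseSLSol

variable {q : ℝ → ℝ} {N : ℕ} {b : ℕ → ℝ} {γ η : ℕ → ℝ} {lam : ℂ} {y y' : ℕ → ℝ → ℂ}

theorem isIntegralSolution (hy : PiecewiseSLSol q N b γ η lam y y') {j : ℕ} (hj : j < N) :
    IsIntegralSolution (fun t => (q t : ℂ) - lam) (b j) (b (j + 1)) (y (j + 1)) (y' (j + 1)) where
  eq_add_integral := hy.1 (j + 1) j.succ_pos hj
  deriv_eq_add_integral := hy.2.1 (j + 1) j.succ_pos hj

theorem energyNorm_jump_le (hy : PiecewiseSLSol q N b γ η lam y y') {κ : ℝ} (hκ : 1 ≤ κ) {j : ℕ}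
    (hj : 1 ≤ j) (hjN : j < N) :
    energyNorm κ (y (j + 1) (b j)) (y' (j + 1) (b j)) ≤
      jumpConstant γ η j * energyNorm κ (y j (b j)) (y' j (b j)) := by
  obtain ⟨hval, hderiv⟩ := hy.2.2 j hj (Nat.le_sub_one_of_lt hjN)
  rw [hval, hderiv]
  simpa [jumpConstant] using
    energyNorm_transfer_le hκ (γ j : ℂ) (γ j : ℂ)⁻¹ (η j) (y j (b j)) (y' j (b j))

theorem energyNorm_le (hy : PiecewiseSLSol q N b γ η lam y y') (hb : MonotoneOn b (Iic N))
    (hq : IntegrableOn q (Icc (b 0) (b N))) {κ : ℝ} (hκ : 1 ≤ κ) {j : ℕ} (hj : j < N) :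
    energyNorm κ (y (j + 1) (b (j + 1))) (y' (j + 1) (b (j + 1))) ≤
      (∏ i ∈ Finset.range j, jumpConstant γ η (i + 1)) *
        Real.exp (∫ t in b 0..b (j + 1), energyRate κ (q t - lam)) *
          energyNorm κ (y 1 (b 0)) (y' 1 (b 0)) := by
  have hκ0 : 0 < κ := one_pos.trans_le hκ
  have hV {i k : ℕ} (hik : i ≤ k) (hk : k ≤ N) :
      IntervalIntegrable (fun t => (q t : ℂ) - lam) volume (b i) (b k) := by
    have hi : i ≤ N := hik.trans hk
    have hqik : IntegrableOn q (Icc (b i) (b k)) :=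
      hq.mono_set (Icc_subset_Icc (hb N.zero_le hi i.zero_le) (hb hk self_mem_Iic hk))
    exact (intervalIntegrable_iff_integrableOn_Icc_of_le (hb hi hk hik)).2
      (Integrable.sub hqik.ofReal continuousOn_const.integrableOn_Icc)
  have hpiece {i : ℕ} (hi : i < N) :=
    (hy.isIntegralSolution hi).energyNorm_le (hb hi.le hi i.le_succ) hκ0 (hV i.le_succ hi)
  induction j with
  | zero => simpa [mul_comm] using hpiece hj
  | succ j ih =>
    have hjN : j + 1 < N := hj
    have hsplit := intervalIntegral.integral_add_adjacent_intervals
      (intervalIntegrable_energyRate κ (hV (j + 1).zero_le hjN.le))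
      (intervalIntegrable_energyRate κ (hV (j + 1).le_succ hj))
    rw [Finset.prod_range_succ, ← hsplit, Real.exp_add]
    set P := ∏ i ∈ Finset.range j, jumpConstant γ η (i + 1)
    set I := Real.exp (∫ t in b 0..b (j + 1), energyRate κ (q t - lam))
    set J := Real.exp (∫ t in b (j + 1)..b (j + 1 + 1), energyRate κ (q t - lam))
    calc energyNorm κ (y (j + 2) (b (j + 2))) (y' (j + 2) (b (j + 2)))
        ≤ energyNorm κ (y (j + 2) (b (j + 1))) (y' (j + 2) (b (j + 1))) * J := hpiece hj
      _ ≤ jumpConstant γ η (j + 1) *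
            energyNorm κ (y (j + 1) (b (j + 1))) (y' (j + 1) (b (j + 1))) * J := by
          gcongr
          exact hy.energyNorm_jump_le hκ j.succ_pos hjN
      _ ≤ jumpConstant γ η (j + 1) * (P * I * energyNorm κ (y 1 (b 0)) (y' 1 (b 0))) * J := by
          gcongr
          · exact jumpConstant_nonneg _ _ _
          · exact ih (Nat.lt_of_succ_lt hjN)
      _ = P * jumpConstant γ η (j + 1) * (I * J) * energyNorm κ (y 1 (b 0)) (y' 1 (b 0)) := by
          ring

theorem exists_energyNorm_le (hN : 1 ≤ N) (hb : MonotoneOn b (Iic N))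
    (hq : IntegrableOn q (Icc (b 0) (b N))) (hγ : ∀ j, 1 ≤ j → j ≤ N - 1 → γ j ≠ 0)
    (η : ℕ → ℝ) :
    ∃ K : ℝ, 0 < K ∧ ∀ ρ : ℂ, 1 ≤ ‖ρ‖ → ∀ y y' : ℕ → ℝ → ℂ,
      PiecewiseSLSol q N b γ η (ρ ^ 2) y y' →
        energyNorm ‖ρ‖ (y N (b N)) (y' N (b N)) ≤
          K * Real.exp (|ρ.im| * (b N - b 0)) * energyNorm ‖ρ‖ (y 1 (b 0)) (y' 1 (b 0)) := by
  obtain ⟨n, rfl⟩ := Nat.exists_eq_add_of_le' hN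
  have hb0N : b 0 ≤ b (n + 1) := hb (n + 1).zero_le self_mem_Iic (n + 1).zero_le
  have hqC : IntervalIntegrable (fun t => (q t : ℂ)) volume (b 0) (b (n + 1)) :=
    (intervalIntegrable_iff_integrableOn_Icc_of_le hb0N).2 (Integrable.ofReal hq)
  let P := ∏ i ∈ Finset.range n, jumpConstant γ η (i + 1)
  have hP : 0 < P :=
    Finset.prod_pos fun i hi => jumpConstant_pos (hγ _ i.succ_pos (Finset.mem_range.1 hi)) η
  refine ⟨P * Real.exp (∫ t in b 0..b (n + 1), ‖(q t : ℂ)‖), by positivity, fun ρ hρ y y' hy => ?_⟩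
  calc energyNorm ‖ρ‖ (y (n + 1) (b (n + 1))) (y' (n + 1) (b (n + 1)))
      ≤ P * Real.exp (∫ t in b 0..b (n + 1), energyRate ‖ρ‖ (q t - ρ ^ 2)) *
          energyNorm ‖ρ‖ (y 1 (b 0)) (y' 1 (b 0)) := hy.energyNorm_le hb hq hρ n.lt_succ_self
    _ ≤ P * (Real.exp (∫ t in b 0..b (n + 1), ‖(q t : ℂ)‖) *
          Real.exp (|ρ.im| * (b (n + 1) - b 0))) * energyNorm ‖ρ‖ (y 1 (b 0)) (y' 1 (b 0)) := by
        gcongr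
        · exact energyNorm_nonneg _ _ _
        · exact exp_integral_energyRate_norm_le hb0N hqC hρ
    _ = _ := by rw [← mul_assoc P]

end PiecewiseSLSol

end JumpConditions

theorem norm_mul_add_mul_add_mul_sub_le {𝕜 : Type*} [NormedField 𝕜] (α β h : 𝕜) {c s s' : 𝕜}
    {M e : ℝ} (he : 1 ≤ e) (hc : ‖c‖ ≤ M * e) (hs : ‖s‖ ≤ M * e) (hs' : ‖s'‖ ≤ M * e) :
    ‖α * (c + h * s) + β * s' - (1 + α * β)‖ ≤
      ((‖α‖ * (1 + ‖h‖) + ‖β‖) * M + (1 + ‖α‖ * ‖β‖)) * e := by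
  have hconst : ‖1 + α * β‖ ≤ 1 + ‖α‖ * ‖β‖ :=
    (norm_add_le _ _).trans_eq (by rw [norm_one, norm_mul])
  calc ‖α * (c + h * s) + β * s' - (1 + α * β)‖
      ≤ ‖α * (c + h * s)‖ + ‖β * s'‖ + ‖1 + α * β‖ :=
        (norm_sub_le _ _).trans (by gcongr; exact norm_add_le _ _)
    _ ≤ ‖α‖ * (‖c‖ + ‖h‖ * ‖s‖) + ‖β‖ * ‖s'‖ + (1 + ‖α‖ * ‖β‖) * e := by
        rw [norm_mul, norm_mul β]
        gcongr
        · exact (norm_add_le _ _).trans_eq (by rw [norm_mul])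
        · exact hconst.trans (le_mul_of_one_le_right (by positivity) he)
    _ ≤ ‖α‖ * (M * e + ‖h‖ * (M * e)) + ‖β‖ * (M * e) + (1 + ‖α‖ * ‖β‖) * e := by gcongr
    _ = ((‖α‖ * (1 + ‖h‖) + ‖β‖) * M + (1 + ‖α‖ * ‖β‖)) * e := by ring

theorem characteristic_function_growth_estimates_general
    (T : ℝ) (q : ℝ → ℝ) (hq : IntegrableOn q (Icc 0 T))
    (N : ℕ) (hN : 1 ≤ N) (b : ℕ → ℝ) (γ η : ℕ → ℝ) (h : ℂ)
    (hb0 : b 0 = 0) (hbN : b N = T)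
    (hbmono : ∀ j < N, b j ≤ b (j + 1))
    (hγ : ∀ j, 1 ≤ j → j ≤ N - 1 → γ j ≠ 0)
    (α β : ℂ)
    (S S' C C' : ℕ → ℝ → ℂ → ℂ)
    (hS : ∀ lam : ℂ, PiecewiseSLSol q N b γ η lam
        (fun j x => S j x lam) (fun j x => S' j x lam))
    (hC : ∀ lam : ℂ, PiecewiseSLSol q N b γ η lam
        (fun j x => C j x lam) (fun j x => C' j x lam))
    (hS0 : ∀ lam : ℂ, S 1 0 lam = 0) (hS'0 : ∀ lam : ℂ, S' 1 0 lam = 1)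
    (hC0 : ∀ lam : ℂ, C 1 0 lam = 1) (hC'0 : ∀ lam : ℂ, C' 1 0 lam = 0) :
    ∃ K : ℝ, 0 < K ∧ ∀ ρ : ℂ, 1 ≤ ‖ρ‖ →
      ‖α * (C N T (ρ ^ 2) + h * S N T (ρ ^ 2)) + β * S' N T (ρ ^ 2) - (1 + α * β)‖
        ≤ K * Real.exp (|ρ.im| * T) ∧
      ‖S N T (ρ ^ 2)‖ ≤ K * ‖ρ‖⁻¹ * Real.exp (|ρ.im| * T) := by
  have hb : MonotoneOn b (Iic N) := monotoneOn_of_le_add_one ordConnected_Iic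
    fun j _ _ hj => hbmono j hj
  have hT : 0 ≤ T := by
    rw [← hb0, ← hbN]
    exact hb N.zero_le self_mem_Iic N.zero_le
  obtain ⟨M, hM, H⟩ :=
    PiecewiseSLSol.exists_energyNorm_le hN hb (by rwa [hb0, hbN]) hγ η
  simp only [hb0, hbN, sub_zero] at H
  refine ⟨max ((‖α‖ * (1 + ‖h‖) + ‖β‖) * M + (1 + ‖α‖ * ‖β‖)) M,
    lt_max_of_lt_right hM, fun ρ hρ => ?_⟩
  have hρ0 : 0 < ‖ρ‖ := one_pos.trans_le hρ
  have he : 1 ≤ Real.exp (|ρ.im| * T) := Real.one_le_exp (mul_nonneg (abs_nonneg _) hT)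
  have hS_energy := H ρ hρ _ _ (hS (ρ ^ 2))
  rw [hS0, hS'0, energyNorm_zero_left, norm_one, mul_one] at hS_energy
  have hC_energy := H ρ hρ _ _ (hC (ρ ^ 2))
  rw [hC0, hC'0, energyNorm_zero_right hρ0.le, norm_one, mul_one] at hC_energy
  have hρS := (mul_norm_le_energyNorm _ _ _).trans hS_energy
  have hC_le : ‖C N T (ρ ^ 2)‖ ≤ M * Real.exp (|ρ.im| * T) :=
    le_of_mul_le_mul_left
      ((mul_norm_le_energyNorm _ _ _).trans (hC_energy.trans_eq (mul_comm _ _))) hρ0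
  refine ⟨(norm_mul_add_mul_add_mul_sub_le α β h he hC_le
    ((le_mul_of_one_le_left (norm_nonneg _) hρ).trans hρS)
    ((norm_le_energyNorm _ _ _).trans hS_energy)).trans ?_, ?_⟩
  · gcongr
    exact le_max_left _ _
  · calc ‖S N T (ρ ^ 2)‖ ≤ M * ‖ρ‖⁻¹ * Real.exp (|ρ.im| * T) := by
          rwa [mul_right_comm, ← div_eq_mul_inv, le_div_iff₀' hρ0]
      _ ≤ _ := by gcongr; exact le_max_right _ _

/-- growth estimates for the characteristic functions in the
closed upper half ρ-plane: |a(ρ²)| ≤ K e^{τT} and |d(ρ²)| ≤ K|ρ|⁻¹ e^{τT}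
(τ = Im ρ) for Im ρ ≥ 0, |ρ| ≥ 1, where a(λ) = αφ(T,λ) + βS'(T,λ) − (1+αβ),
φ = C + h·S and d(λ) = S(T,λ). -/
theorem characteristic_function_growth_estimates
    (T : ℝ) (hT : 0 < T) (q : ℝ → ℝ) (hq : IntegrableOn q (Icc 0 T))
    (N : ℕ) (hN : 1 ≤ N) (b : ℕ → ℝ) (γ η : ℕ → ℝ) (h : ℝ)
    (hb0 : b 0 = 0) (hbN : b N = T)
    (hbmono : ∀ j < N, b j < b (j + 1))
    (hγ : ∀ j, 1 ≤ j → j ≤ N - 1 → 0 < γ j)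
    (α β : ℝ) (hαβ : 0 < α * β)
    (S S' C C' : ℕ → ℝ → ℂ → ℂ)
    (hS : ∀ lam : ℂ, PiecewiseSLSol q N b γ η lam
        (fun j x => S j x lam) (fun j x => S' j x lam))
    (hC : ∀ lam : ℂ, PiecewiseSLSol q N b γ η lam
        (fun j x => C j x lam) (fun j x => C' j x lam))
    (hS0 : ∀ lam : ℂ, S 1 0 lam = 0) (hS'0 : ∀ lam : ℂ, S' 1 0 lam = 1)
    (hC0 : ∀ lam : ℂ, C 1 0 lam = 1) (hC'0 : ∀ lam : ℂ, C' 1 0 lam = 0) :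
    ∃ K : ℝ, 0 < K ∧ ∀ ρ : ℂ, 0 ≤ ρ.im → 1 ≤ ‖ρ‖ →
      ‖(α : ℂ) * (C N T (ρ ^ 2) + (h : ℂ) * S N T (ρ ^ 2))
          + (β : ℂ) * S' N T (ρ ^ 2) - (1 + (α : ℂ) * (β : ℂ))‖
        ≤ K * Real.exp (ρ.im * T) ∧
      ‖S N T (ρ ^ 2)‖ ≤ K * ‖ρ‖⁻¹ * Real.exp (ρ.im * T) := by
  obtain ⟨K, hK, H⟩ := characteristic_function_growth_estimates_general T q hq N hN b γ η h hb0 hbN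
    (fun j hj => (hbmono j hj).le) (fun j h1 h2 => (hγ j h1 h2).ne') α β S S' C C' hS hC
    hS0 hS'0 hC0 hC'0
  exact ⟨K, hK, fun ρ hρ hρ1 => by simpa only [abs_of_nonneg hρ] using H ρ hρ1⟩
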